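/- Let X be a dcpo whose Scott topology is sober (T0 and quasi-sober). The map K ↦ (U ↦ (K ⊆ U)) is an order isomorphism from the poset of compact saturated subsets of X (including ∅), ordered by reverse inclusion, onto the poset (ordered pointwise) of all maps φ : O(X) → Prop satisfying φ(X) = True, φ(U ∩ V) = φ(U) ∧ φ(V) for all Scott-open U, V, and φ(⋃ᵢ Uᵢ) = (∃ i, φ(Uᵢ)) for every nonempty directed family (Uᵢ) of Scott-open sets. -/

import Mathlib

open Set TopologicalSpace

/-- A dcpo: every nonempty directed subset has a least upper bound. -/
def IsDcpo (α : Type*) [Preorder α] : Prop :=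
  ∀ d : Set α, d.Nonempty → DirectedOn (· ≤ ·) d → ∃ a, IsLUB d a

/-- A subset of a topological space is saturated if it equals the intersection of the open
sets containing it. -/
def IsSaturatedSet {Z : Type*} [TopologicalSpace Z] (K : Set Z) : Prop :=
  K = ⋂₀ {U : Set Z | IsOpen U ∧ K ⊆ U}

/-- The elements of the Smyth powerdomain in functional form: maps `φ : O(X) → Prop` with
`φ(X) = True`, `φ(U ∩ V) = φ(U) ∧ φ(V)` and `φ(⋃ᵢ Uᵢ) = ∃ i, φ(Uᵢ)` for nonempty directed
families of opens. -/
def IsSmythFunctional {X : Type*} [TopologicalSpace X] (φ : Opens X → Prop) : Prop :=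
  φ ⊤ ∧
  (∀ U V : Opens X, φ (U ⊓ V) ↔ φ U ∧ φ V) ∧
  (∀ S : Set (Opens X), S.Nonempty → DirectedOn (· ≤ ·) S → (φ (sSup S) ↔ ∃ U ∈ S, φ U))

/-!
This is the Hofmann–Mislove theorem. The functional `U ↦ (K ⊆ U)` of a compact set `K` is the
indicator of a Scott-open filter of opens, and a saturated `K` is recovered as the intersection of
that filter. Conversely, let `F` be a Scott-open filter and `U ∉ F`. Since the complement of `F` is
closed under directed suprema, Zorn's lemma enlarges `U` to a maximal open `W ∉ F`; maximality
against a filter makes `W` meet-prime, so its complement is irreducible and, by sobriety, the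
closure of a point. This point lies in every member of `F` but not in `U`. Hence an open set
belongs to `F` as soon as it contains `⋂ F`, and the Scott-openness of `F` says precisely that
`⋂ F` is compact.
-/

open Order

section Order

variable {α : Type*}

theorem exists_le_maximal_of_dirSupClosed [Preorder α] (hα : IsDcpo α) {s : Set α}
    (hs : DirSupClosed s) {a : α} (ha : a ∈ s) : ∃ m, a ≤ m ∧ Maximal (· ∈ s) m := by
  refine zorn_le_nonempty₀ s (fun c hcs hc y hy => ?_) a ha
  obtain ⟨b, hb⟩ := hα c ⟨y, hy⟩ hc.directedOn
  exact ⟨b, hs hcs ⟨y, hy⟩ hc.directedOn hb, hb.1⟩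

theorem infIrred_of_maximal_notMem_pfilter [Lattice α] {F : PFilter α} {m : α}
    (hm : Maximal (· ∉ F) m) : InfIrred m := by
  have mem_of_gt {b : α} (hb : m < b) : b ∈ F := not_not.1 (hm.not_prop_of_gt hb)
  refine ⟨fun hmax => ?_, fun b c hbc => ?_⟩
  · obtain ⟨a, ha⟩ := F.nonempty
    exact hm.prop (PFilter.mem_of_le (hmax.isTop a) ha)
  · by_contra! hne
    have hb : b ∈ F := mem_of_gt ((hbc ▸ inf_le_left).lt_of_ne hne.1.symm)
    have hc : c ∈ F := mem_of_gt ((hbc ▸ inf_le_right).lt_of_ne hne.2.symm)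
    exact hm.prop (hbc ▸ PFilter.inf_mem hb hc)

end Order

section Topology

variable {X : Type*} [TopologicalSpace X]

theorem isIrreducible_compl_of_infPrime {W : Opens X} (hW : InfPrime W) :
    IsIrreducible (W : Set X)ᶜ := by
  refine ⟨nonempty_compl.2 fun h => hW.ne_top (Opens.ext h), fun A B hA hB hAW hBW => ?_⟩
  rw [inter_comm, inter_compl_nonempty_iff] at hAW hBW ⊢
  exact fun hAB => (@hW.2 ⟨A, hA⟩ ⟨B, hB⟩ hAB).elim hAW hBW

theorem exists_forall_le_iff_notMem_of_infPrime [QuasiSober X] {W : Opens X} (hW : InfPrime W) :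
    ∃ x, ∀ U : Opens X, U ≤ W ↔ x ∉ U := by
  obtain ⟨x, hx⟩ := QuasiSober.sober (isIrreducible_compl_of_infPrime hW) W.isOpen.isClosed_compl
  refine ⟨x, fun U => ⟨fun hUW hxU => hx.mem (hUW hxU), fun hxU y hyU => ?_⟩⟩
  by_contra hyW
  exact hxU ((hx.specializes hyW).mem_open U.isOpen hyU)

theorem isPFilter_superset_opens (K : Set X) : IsPFilter {U : Opens X | K ⊆ U} :=
  .of_def ⟨⊤, subset_univ K⟩
    (fun U hU V hV => ⟨U ⊓ V, subset_inter hU hV, inf_le_left, inf_le_right⟩)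
    fun hUV hU => Subset.trans (mem_ofPred.1 hU) hUV

theorem isCompact_iff_dirSupInacc {K : Set X} :
    IsCompact K ↔ DirSupInacc {U : Opens X | K ⊆ U} := by
  constructor
  · intro hK d hd hdir a ha hKa
    have : Nonempty d := hd.to_subtype
    rw [← ha.sSup_eq, mem_ofPred_eq, Opens.coe_sSup, biUnion_eq_iUnion] at hKa
    obtain ⟨U, hU⟩ := hK.elim_directed_cover (fun U : d => (U : Set X)) (fun U => U.1.isOpen) hKa
      hdir.directed_val
    exact ⟨U, U.2, hU⟩
  · intro h
    refine isCompact_of_finite_subcover fun {ι} U hU hKU => ?_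
    let partialSup (t : Finset ι) : Opens X := ⨆ i ∈ t, ⟨U i, hU i⟩
    have partialSup_mono : Monotone partialSup := fun s t hst => biSup_mono fun i hi => hst hi
    have subset_iSup : K ⊆ (⨆ t, partialSup t : Opens X) := by
      simpa only [partialSup, ← iSup_eq_iSup_finset, Opens.coe_iSup, Opens.coe_mk] using hKU
    obtain ⟨_, ⟨t, rfl⟩, ht⟩ := h (range_nonempty partialSup)
      (directedOn_range.2 partialSup_mono.directed_le) isLUB_iSup subset_iSup
    exact ⟨t, by simpa only [partialSup, mem_ofPred_eq, Opens.coe_iSup, Opens.coe_mk] using ht⟩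

theorem isSaturatedSet_iff_nhdsKer_eq {K : Set X} : IsSaturatedSet K ↔ nhdsKer K = K := by
  rw [IsSaturatedSet, nhdsKer_def, eq_comm]

theorem IsSaturatedSet.subset_iff {K L : Set X} (hK : IsSaturatedSet K) :
    L ⊆ K ↔ ∀ U : Opens X, K ⊆ U → L ⊆ U := by
  conv_lhs => rw [← isSaturatedSet_iff_nhdsKer_eq.1 hK, subset_nhdsKer_iff]
  exact ⟨fun h U => h U U.isOpen, fun h U hU => h ⟨U, hU⟩⟩

theorem isSaturatedSet_biInter_opens (S : Set (Opens X)) :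
    IsSaturatedSet (⋂ U ∈ S, (U : Set X)) :=
  isSaturatedSet_iff_nhdsKer_eq.2 <| subset_nhdsKer.antisymm' <| subset_iInter₂ fun U hU =>
    nhdsKer_minimal (biInter_subset_of_mem hU) U.isOpen

theorem biInter_pfilter_subset_iff [QuasiSober X] {F : PFilter (Opens X)}
    (hF : DirSupInacc (F : Set (Opens X))) {U : Opens X} :
    ⋂ V ∈ F, (V : Set X) ⊆ U ↔ U ∈ F := by
  refine ⟨fun hU => ?_, fun hU => biInter_subset_of_mem hU⟩
  by_contra hUF
  obtain ⟨W, hUW, hW⟩ := exists_le_maximal_of_dirSupClosed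
    (fun d _ _ => ⟨sSup d, isLUB_sSup d⟩) (dirSupClosed_compl.2 hF) hUF
  have hWprime : InfPrime W := (infIrred_of_maximal_notMem_pfilter hW).infPrime
  obtain ⟨x, hx⟩ := exists_forall_le_iff_notMem_of_infPrime hWprime
  have hxF : x ∈ ⋂ V ∈ F, (V : Set X) := mem_iInter₂.2 fun V hV =>
    not_not.1 fun hxV => hW.prop (PFilter.mem_of_le ((hx V).2 hxV) hV)
  exact (hx U).1 hUW (hU hxF)

theorem isCompact_biInter_pfilter [QuasiSober X] {F : PFilter (Opens X)}
    (hF : DirSupInacc (F : Set (Opens X))) : IsCompact (⋂ V ∈ F, (V : Set X)) := by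
  rw [isCompact_iff_dirSupInacc]
  simp only [biInter_pfilter_subset_iff hF]
  exact hF

theorem isSmythFunctional_iff_isPFilter_and_dirSupInacc {φ : Opens X → Prop} :
    IsSmythFunctional φ ↔ IsPFilter {U | φ U} ∧ DirSupInacc {U | φ U} := by
  constructor
  · rintro ⟨htop, hinf, hsSup⟩
    refine ⟨.of_def ⟨⊤, htop⟩ ?_ fun {U V} hUV hU => ?_, fun d hd hdir a ha hφa => ?_⟩
    · exact fun U hU V hV => ⟨U ⊓ V, (hinf U V).2 ⟨hU, hV⟩, inf_le_left, inf_le_right⟩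
    · rw [← inf_eq_left.2 hUV] at hU
      exact ((hinf U V).1 hU).2
    · rw [← ha.sSup_eq] at hφa
      exact (hsSup d hd hdir).1 hφa
  · rintro ⟨hfilter, hinacc⟩
    let F : PFilter (Opens X) := hfilter.toPFilter
    exact ⟨F.top_mem, fun U V => F.inf_mem_iff, fun S hS hdir =>
      ⟨hinacc hS hdir (isLUB_sSup S), fun ⟨U, hUS, hU⟩ => F.mem_of_le (le_sSup hUS) hU⟩⟩

theorem isSmythFunctional_subset_iff_isCompact {K : Set X} :
    IsSmythFunctional (fun U : Opens X => K ⊆ U) ↔ IsCompact K := by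
  rw [isSmythFunctional_iff_isPFilter_and_dirSupInacc, isCompact_iff_dirSupInacc]
  exact and_iff_right (isPFilter_superset_opens K)

theorem IsSmythFunctional.exists_isCompact_isSaturatedSet [QuasiSober X] {φ : Opens X → Prop}
    (hφ : IsSmythFunctional φ) :
    ∃ K : Set X, (IsCompact K ∧ IsSaturatedSet K) ∧ ∀ U : Opens X, K ⊆ U ↔ φ U := by
  obtain ⟨hfilter, hinacc⟩ := isSmythFunctional_iff_isPFilter_and_dirSupInacc.1 hφ
  let F : PFilter (Opens X) := hfilter.toPFilter
  exact ⟨⋂ V ∈ F, (V : Set X),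
    ⟨isCompact_biInter_pfilter hinacc, isSaturatedSet_biInter_opens (F : Set (Opens X))⟩,
    fun _ => biInter_pfilter_subset_iff (F := F) hinacc⟩

end Topology

theorem compactSaturated_orderIso_smythFunctionals_general {X : Type*} [TopologicalSpace X]
    [QuasiSober X] :
    ∃ e : {K : Set X // IsCompact K ∧ IsSaturatedSet K} ≃
          {φ : Opens X → Prop // IsSmythFunctional φ},
      (∀ (K : {K : Set X // IsCompact K ∧ IsSaturatedSet K}) (U : Opens X),
        (e K).1 U ↔ K.1 ⊆ (U : Set X)) ∧
      (∀ K K' : {K : Set X // IsCompact K ∧ IsSaturatedSet K},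
        K'.1 ⊆ K.1 ↔ e K ≤ e K') := by
  let e (K : {K : Set X // IsCompact K ∧ IsSaturatedSet K}) :
      {φ : Opens X → Prop // IsSmythFunctional φ} :=
    ⟨fun U => K.1 ⊆ U, isSmythFunctional_subset_iff_isCompact.2 K.2.1⟩
  have subset_iff_le (K K' : {K : Set X // IsCompact K ∧ IsSaturatedSet K}) :
      K'.1 ⊆ K.1 ↔ e K ≤ e K' := K.2.2.subset_iff
  have injective_e : Function.Injective e := fun K K' h => Subtype.ext <|
    ((subset_iff_le K' K).2 h.ge).antisymm ((subset_iff_le K K').2 h.le)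
  have surjective_e : Function.Surjective e := fun φ => by
    obtain ⟨K, hK, hKφ⟩ := φ.2.exists_isCompact_isSaturatedSet
    exact ⟨⟨K, hK⟩, Subtype.ext (funext fun U => propext (hKφ U))⟩
  exact ⟨Equiv.ofBijective e ⟨injective_e, surjective_e⟩, fun _ _ => Iff.rfl, subset_iff_le⟩

/-- For a dcpo `X` whose Scott topology is sober, `K ↦ (U ↦ (K ⊆ U))` is an order
isomorphism from the compact saturated subsets of `X` ordered by reverse inclusion onto the
Smyth functionals `O(X) → Prop` ordered pointwise. -/
theorem compactSaturated_orderIso_smythFunctionals {X : Type*} [PartialOrder X]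
    [TopologicalSpace X] [Topology.IsScott X Set.univ]
    (hX : IsDcpo X) [T0Space X] [QuasiSober X] :
    ∃ e : {K : Set X // IsCompact K ∧ IsSaturatedSet K} ≃
          {φ : Opens X → Prop // IsSmythFunctional φ},
      (∀ (K : {K : Set X // IsCompact K ∧ IsSaturatedSet K}) (U : Opens X),
        (e K).1 U ↔ K.1 ⊆ (U : Set X)) ∧
      (∀ K K' : {K : Set X // IsCompact K ∧ IsSaturatedSet K},
        K'.1 ⊆ K.1 ↔ e K ≤ e K') :=
  compactSaturated_orderIso_smythFunctionals_general
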